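/- For every ε > 0 there exists n₀ such that for all n ≥ n₀, every properly edge-coloured graph G on n vertices with δ(G) ≥ n/2 has a rainbow matching of size at least (1−ε)·n/2. -/

import Mathlib

/-!
STATEMENT 14: For every `ε > 0` there exists `n₀` such that for all `n ≥ n₀`, every
properly edge-coloured graph `G` on `n` vertices with `δ(G) ≥ n/2` has a rainbow
matching of size at least `(1−ε)·n/2`.
-/

namespace Paper

variable {V : Type*} {C : Type*}

/-- The edge-colouring `c` is proper on `G`: edges sharing a vertex get distinct colours. -/
def ProperColoring (G : SimpleGraph V) (c : Sym2 V → C) : Prop :=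
  ∀ u v w : V, G.Adj u v → G.Adj u w → v ≠ w → c s(u, v) ≠ c s(u, w)

/-- `G` has a rainbow matching of size `k` under the colouring `c`: `k` pairwise
vertex-disjoint edges with pairwise distinct colours. -/
def HasRainbowMatching (G : SimpleGraph V) (c : Sym2 V → C) (k : ℕ) : Prop :=
  ∃ M : Finset (Sym2 V), M.card = k ∧ (∀ e ∈ M, e ∈ G.edgeSet) ∧
    (∀ e ∈ M, ∀ f ∈ M, e ≠ f → ∀ x : V, x ∈ e → x ∉ f) ∧
    (∀ e ∈ M, ∀ f ∈ M, e ≠ f → c e ≠ c f)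


section Product

variable {X : Type*} [Fintype X] [DecidableEq X]

/-- The weight of a bit under the Bernoulli distribution of parameter `p`. -/
def bitWeight (p : ℝ) (b : Bool) : ℝ := if b then p else 1 - p

/-- The expectation of `g` under the product of Bernoulli distributions of parameter `p`. -/
def expect (p : ℝ) (g : (X → Bool) → ℝ) : ℝ := ∑ ω, (∏ x, bitWeight p (ω x)) * g ω

/-- The discrete derivative of `f` in the direction `x`. -/
def discreteDeriv (f : (X → Bool) → ℝ) (x : X) (ω : X → Bool) : ℝ :=
  f (Function.update ω x true) - f (Function.update ω x false)

lemma bitWeight_pos {p : ℝ} (h0 : 0 < p) (h1 : p < 1) (b : Bool) : 0 < bitWeight p b := by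
  cases b <;> simp [bitWeight] <;> linarith

lemma expect_add (p : ℝ) (g h : (X → Bool) → ℝ) :
    expect p (fun ω => g ω + h ω) = expect p g + expect p h := by
  simp [expect, mul_add, Finset.sum_add_distrib]

lemma expect_sub (p : ℝ) (g h : (X → Bool) → ℝ) :
    expect p (fun ω => g ω - h ω) = expect p g - expect p h := by
  simp [expect, mul_sub, Finset.sum_sub_distrib]

lemma expect_const_mul (p a : ℝ) (g : (X → Bool) → ℝ) :
    expect p (fun ω => a * g ω) = a * expect p g := by
  simp only [expect, Finset.mul_sum]
  exact Finset.sum_congr rfl fun _ _ => by ring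

lemma expect_sum {ι : Type*} (p : ℝ) (I : Finset ι) (g : ι → (X → Bool) → ℝ) :
    expect p (fun ω => ∑ i ∈ I, g i ω) = ∑ i ∈ I, expect p (g i) := by
  simp only [expect, Finset.mul_sum]
  exact Finset.sum_comm

lemma expect_const (p a : ℝ) : expect p (fun _ : X → Bool => a) = a := by
  have h : ∑ ω : X → Bool, ∏ x, bitWeight p (ω x) = 1 := by
    rw [← Fintype.prod_sum]
    simp [bitWeight]
  rw [expect, ← Finset.sum_mul, h, one_mul]

lemma expect_mono {p : ℝ} (h0 : 0 < p) (h1 : p < 1) {g h : (X → Bool) → ℝ}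
    (hgh : ∀ ω, g ω ≤ h ω) : expect p g ≤ expect p h :=
  Finset.sum_le_sum fun ω _ => mul_le_mul_of_nonneg_left (hgh ω)
    (Finset.prod_nonneg fun x _ => (bitWeight_pos h0 h1 (ω x)).le)

lemma sum_bit_mul_prod_erase (p : ℝ) (s : Bool → ℝ) (g : (X → Bool) → ℝ) (x : X) :
    ∑ ω : X → Bool, s (ω x) * (∏ y ∈ Finset.univ.erase x, bitWeight p (ω y)) * g ω =
      ∑ b, s b * expect p (fun ω => g (Function.update ω x b)) := by
  have key : ∀ G : (X → Bool) → ℝ,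
      ∑ ω, G ω = ∑ η : {y // y ≠ x} → Bool, ∑ b : Bool, G ((Equiv.funSplitAt x Bool).symm (b, η)) := by
    intro G
    rw [← (Equiv.funSplitAt x Bool).symm.sum_comp, Fintype.sum_prod_type, Finset.sum_comm]
  have hprod : ∀ (b : Bool) (η : {y // y ≠ x} → Bool),
      ∏ y ∈ Finset.univ.erase x, bitWeight p ((Equiv.funSplitAt x Bool).symm (b, η) y) =
        ∏ y, bitWeight p (η y) := by
    intro b η
    rw [Finset.prod_subtype (p := fun y => y ≠ x) _ (by simp)]
    refine Finset.prod_congr rfl fun y _ => ?_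
    simp [Equiv.funSplitAt, Equiv.piSplitAt, y.2]
  have hx : ∀ (b : Bool) (η : {y // y ≠ x} → Bool),
      (Equiv.funSplitAt x Bool).symm (b, η) x = b := by
    intro b η; simp [Equiv.funSplitAt, Equiv.piSplitAt]
  have hup : ∀ (b b' : Bool) (η : {y // y ≠ x} → Bool),
      Function.update ((Equiv.funSplitAt x Bool).symm (b, η)) x b' =
        (Equiv.funSplitAt x Bool).symm (b', η) := by
    intro b b' η
    ext y
    by_cases h : y = x
    · subst h; simp [Equiv.funSplitAt, Equiv.piSplitAt]
    · simp [Equiv.funSplitAt, Equiv.piSplitAt, h]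
  have hexp : ∀ b, expect p (fun ω => g (Function.update ω x b)) =
      ∑ η : {y // y ≠ x} → Bool,
        (∏ y, bitWeight p (η y)) * g ((Equiv.funSplitAt x Bool).symm (b, η)) := by
    intro b
    rw [expect, key]
    refine Finset.sum_congr rfl fun η _ => ?_
    simp only [← Finset.mul_prod_erase _ _ (Finset.mem_univ x), hprod, hx, hup, ← Finset.sum_mul]
    simp [bitWeight]
  rw [key]
  simp only [hprod, hx, hexp, Finset.mul_sum]
  rw [Finset.sum_comm]
  exact Finset.sum_congr rfl fun b _ => Finset.sum_congr rfl fun η _ => by ring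

/-- The indicator of the event that the bit at `x` is `b`, normalised to have mean one. -/
noncomputable def normIndicator (p : ℝ) (x : X) (b : Bool) (ω : X → Bool) : ℝ :=
  if ω x = b then (bitWeight p b)⁻¹ else 0

lemma expect_normIndicator_mul {p : ℝ} (h0 : 0 < p) (h1 : p < 1) (x : X) (b : Bool)
    (g : (X → Bool) → ℝ) :
    expect p (fun ω => normIndicator p x b ω * g ω) =
      expect p (fun ω => g (Function.update ω x b)) := by
  have h := sum_bit_mul_prod_erase p (fun b' => if b' = b then 1 else 0) g x
  simp only [ite_mul, one_mul, zero_mul, Finset.sum_ite_eq', Finset.mem_univ, if_true] at h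
  rw [← h, expect]
  refine Finset.sum_congr rfl fun ω _ => ?_
  rw [← Finset.mul_prod_erase _ _ (Finset.mem_univ x), normIndicator]
  split_ifs with hb
  · rw [hb]
    field_simp [(bitWeight_pos h0 h1 b).ne']
  · ring

lemma hasDerivAt_expect (f : (X → Bool) → ℝ) (p : ℝ) :
    HasDerivAt (fun q => expect q f) (∑ x, expect p (discreteDeriv f x)) p := by
  have hb : ∀ b : Bool, HasDerivAt (fun q => bitWeight q b) (if b then 1 else -1) p := by
    intro b
    cases b
    · simpa [bitWeight] using (hasDerivAt_id p).const_sub 1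
    · simpa [bitWeight] using hasDerivAt_id' p
  have h : HasDerivAt (fun q => expect q f) (∑ ω : X → Bool,
      (∑ x, (∏ y ∈ Finset.univ.erase x, bitWeight p (ω y)) • (if ω x then (1 : ℝ) else -1)) * f ω)
      p := by
    unfold expect
    exact HasDerivAt.fun_sum fun ω _ =>
      (HasDerivAt.fun_finsetProd fun x _ => hb (ω x)).mul_const _
  convert h using 1
  simp only [Finset.sum_mul]
  rw [Finset.sum_comm]
  refine Finset.sum_congr rfl fun x _ => ?_
  have := sum_bit_mul_prod_erase p (fun b => if b then (1 : ℝ) else -1) f x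
  unfold discreteDeriv
  rw [expect_sub]
  simp only [smul_eq_mul, mul_comm (∏ y ∈ Finset.univ.erase x, _)]
  rw [this]
  simp [sub_eq_add_neg]

/-- A Bessel-type inequality: reweighting `h` by many nearly uncorrelated densities changes its
expectation by little on average. -/
lemma sum_expect_mul_sub_le {ι : Type*} {p : ℝ} (h0 : 0 < p) (h1 : p < 1) (I : Finset ι)
    (T : ι → (X → Bool) → ℝ) (h : (X → Bool) → ℝ) {θ K : ℝ} (hθ : 0 < θ)
    (hT : ∀ i ∈ I, expect p (T i) = 1) (hTT : ∀ i ∈ I, expect p (fun ω => T i ω * T i ω) ≤ K)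
    (hTT' : ∀ i ∈ I, ∀ j ∈ I, i ≠ j → expect p (fun ω => T i ω * T j ω) ≤ 1)
    (hh0 : ∀ ω, 0 ≤ h ω) (hh1 : ∀ ω, h ω ≤ 1) :
    ∑ i ∈ I, (expect p (fun ω => T i ω * h ω) - expect p h) ≤
      θ / 2 * expect p h + I.card * (K / (2 * θ)) := by
  classical
  have hZ : expect p (fun ω => (∑ i ∈ I, (T i ω - 1)) * ∑ j ∈ I, (T j ω - 1)) ≤ I.card * K := by
    simp only [Finset.sum_mul_sum]
    rw [expect_sum]
    simp only [expect_sum]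
    rw [← nsmul_eq_mul]
    refine Finset.sum_le_card_nsmul _ _ _ fun i hi => ?_
    have hterm : ∀ j ∈ I, expect p (fun ω => (T i ω - 1) * (T j ω - 1)) =
        expect p (fun ω => T i ω * T j ω) - 1 := by
      intro j hj
      have : (fun ω => (T i ω - 1) * (T j ω - 1)) =
          fun ω => (T i ω * T j ω - T i ω) - (T j ω - 1) := by ext ω; ring
      rw [this, expect_sub, expect_sub, expect_sub, hT i hi, hT j hj, expect_const]
      ring
    rw [Finset.sum_congr rfl hterm, ← Finset.add_sum_erase _ _ hi]
    have : ∑ j ∈ I.erase i, (expect p (fun ω => T i ω * T j ω) - 1) ≤ 0 :=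
      Finset.sum_nonpos fun j hj => by
        have := hTT' i hi j (Finset.mem_of_mem_erase hj) (Finset.ne_of_mem_erase hj).symm
        linarith
    have := hTT i hi
    linarith
  have hL : ∑ i ∈ I, (expect p (fun ω => T i ω * h ω) - expect p h) =
      expect p (fun ω => (∑ i ∈ I, (T i ω - 1)) * h ω) := by
    simp only [Finset.sum_mul]
    rw [expect_sum]
    refine Finset.sum_congr rfl fun i _ => ?_
    rw [← expect_sub]
    congr 1; ext ω; ring
  have hpt : ∀ ω, (∑ i ∈ I, (T i ω - 1)) * h ω ≤
      θ / 2 * h ω + 1 / (2 * θ) * ((∑ i ∈ I, (T i ω - 1)) * ∑ j ∈ I, (T j ω - 1)) := by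
    intro ω
    set z := ∑ i ∈ I, (T i ω - 1)
    have hsq : z * h ω ≤ θ / 2 * (h ω * h ω) + 1 / (2 * θ) * (z * z) := by
      have : θ / 2 * (h ω * h ω) + 1 / (2 * θ) * (z * z) - z * h ω =
          (θ * h ω - z) ^ 2 / (2 * θ) := by field_simp; ring
      have : 0 ≤ (θ * h ω - z) ^ 2 / (2 * θ) := by positivity
      linarith
    have : θ / 2 * (h ω * h ω) ≤ θ / 2 * h ω :=
      mul_le_mul_of_nonneg_left (by nlinarith [hh0 ω, hh1 ω]) (by positivity)
    linarith
  rw [hL]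
  refine (expect_mono h0 h1 hpt).trans ?_
  rw [expect_add, expect_const_mul, expect_const_mul]
  have : 1 / (2 * θ) * expect p (fun ω => (∑ i ∈ I, (T i ω - 1)) * ∑ j ∈ I, (T j ω - 1)) ≤
      1 / (2 * θ) * (I.card * K) := mul_le_mul_of_nonneg_left hZ (by positivity)
  have e : 1 / (2 * θ) * (I.card * K) = I.card * (K / (2 * θ)) := by ring
  linarith

/-- Conditioning `h (key i)` on two bits, averaged over many indices `i` whose conditions are
disjoint or contradictory for equal keys, changes its expectation by little. -/
lemma sum_expect_update_sub_le {π : Type*} {p δ : ℝ} (hδ : 0 < δ) (h0 : δ ≤ p) (h1 : p ≤ 1 - δ)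
    (P : Finset π) (key a b : π → X) (α β : Bool) (h : X → (X → Bool) → ℝ) {θ : ℝ} (hθ : 0 < θ)
    (hab : ∀ i ∈ P, a i ≠ b i)
    (hij : ∀ i ∈ P, ∀ j ∈ P, i ≠ j → key i = key j →
      (a i ≠ a j ∧ a i ≠ b j ∧ b i ≠ a j ∧ b i ≠ b j) ∨ (α ≠ β ∧ a i = b j))
    (hh0 : ∀ x ω, 0 ≤ h x ω) (hh1 : ∀ x ω, h x ω ≤ 1) :
    ∑ i ∈ P, (expect p (fun ω => h (key i) (Function.update (Function.update ω (b i) β) (a i) α)) -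
      expect p (h (key i))) ≤
      θ / 2 * ∑ x, expect p (h x) + P.card * (1 / δ ^ 2 / (2 * θ)) := by
  classical
  have p0 : 0 < p := hδ.trans_le h0
  have p1 : p < 1 := by linarith
  have hw : ∀ c, (bitWeight p c)⁻¹ ≤ 1 / δ := by
    intro c
    rw [inv_eq_one_div]
    refine one_div_le_one_div_of_le hδ ?_
    cases c <;> simp [bitWeight] <;> linarith
  have hw0 : ∀ c, 0 ≤ (bitWeight p c)⁻¹ := fun c => (inv_pos.2 (bitWeight_pos p0 p1 c)).le
  set T : π → (X → Bool) → ℝ :=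
    fun i ω => normIndicator p (a i) α ω * normIndicator p (b i) β ω with hTdef
  have hTg : ∀ i ∈ P, ∀ g : (X → Bool) → ℝ, expect p (fun ω => T i ω * g ω) =
      expect p (fun ω => g (Function.update (Function.update ω (b i) β) (a i) α)) := by
    intro i hi g
    simp only [hTdef, mul_assoc]
    rw [expect_normIndicator_mul p0 p1 (a i) α (fun ω => normIndicator p (b i) β ω * g ω)]
    have : (fun ω => normIndicator p (b i) β (Function.update ω (a i) α) *
        g (Function.update ω (a i) α)) =
        fun ω => normIndicator p (b i) β ω * g (Function.update ω (a i) α) := by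
      ext ω
      simp [normIndicator, Function.update_of_ne (hab i hi).symm]
    rw [this, expect_normIndicator_mul p0 p1 (b i) β (fun ω => g (Function.update ω (a i) α))]
  have hT1 : ∀ i ∈ P, expect p (T i) = 1 := by
    intro i hi
    have := hTg i hi (fun _ => 1)
    simpa [expect_const] using this
  have hTT : ∀ i ∈ P, expect p (fun ω => T i ω * T i ω) ≤ 1 / δ ^ 2 := by
    intro i hi
    have hle : ∀ ω, T i ω ≤ 1 / δ ^ 2 := by
      intro ω
      have e : (1 : ℝ) / δ ^ 2 = 1 / δ * (1 / δ) := by ring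
      rw [e]
      have hn : ∀ x c, normIndicator p x c ω ≤ 1 / δ := by
        intro x c; unfold normIndicator; split_ifs
        · exact hw c
        · positivity
      have hn0 : ∀ x c, 0 ≤ normIndicator p x c ω := by
        intro x c; unfold normIndicator; split_ifs
        · exact hw0 c
        · exact le_rfl
      exact mul_le_mul (hn _ _) (hn _ _) (hn0 _ _) (by positivity)
    rw [hTg i hi]
    refine (expect_mono p0 p1 fun ω => hle _).trans ?_
    rw [expect_const]
  have hTT' : ∀ i ∈ P, ∀ j ∈ P, i ≠ j → key i = key j →
      expect p (fun ω => T i ω * T j ω) ≤ 1 := by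
    intro i hi j hj hne hk
    rcases hij i hi j hj hne hk with ⟨h1, h2, h3, h4⟩ | ⟨hαβ, hc⟩
    · rw [hTg i hi, ← hT1 j hj]
      refine le_of_eq ?_
      congr 1
      ext ω
      simp [hTdef, normIndicator, Function.update_of_ne h1.symm, Function.update_of_ne h2.symm,
        Function.update_of_ne h3.symm, Function.update_of_ne h4.symm]
    · have : (fun ω => T i ω * T j ω) = fun _ => (0 : ℝ) := by
        ext ω
        simp only [hTdef, normIndicator, hc]
        by_cases h1 : ω (b j) = α
        · have : ω (b j) ≠ β := by rw [h1]; exact hαβ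
          simp [this]
        · simp [h1]
      rw [this, expect_const]
      exact zero_le_one
  have hfib : ∀ x, ∑ i ∈ P with key i = x, (expect p (fun ω => T i ω * h (key i) ω) -
      expect p (h (key i))) ≤
      θ / 2 * expect p (h x) + ((P.filter fun i => key i = x).card : ℝ) *
        (1 / δ ^ 2 / (2 * θ)) := by
    intro x
    refine le_trans (le_of_eq ?_) (sum_expect_mul_sub_le p0 p1 (P.filter fun i => key i = x) T (h x)
      hθ (fun i hi => hT1 i (Finset.mem_filter.1 hi).1)
      (fun i hi => hTT i (Finset.mem_filter.1 hi).1)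
      (fun i hi j hj hne => hTT' i (Finset.mem_filter.1 hi).1 j (Finset.mem_filter.1 hj).1 hne
        ((Finset.mem_filter.1 hi).2.trans (Finset.mem_filter.1 hj).2.symm)) (hh0 x) (hh1 x))
    exact Finset.sum_congr rfl fun i hi => by rw [(Finset.mem_filter.1 hi).2]
  have hsum : ∑ i ∈ P, (expect p (fun ω =>
      h (key i) (Function.update (Function.update ω (b i) β) (a i) α)) - expect p (h (key i))) =
      ∑ x, ∑ i ∈ P with key i = x, (expect p (fun ω => T i ω * h (key i) ω) -
      expect p (h (key i))) := by
    rw [Finset.sum_fiberwise]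
    exact Finset.sum_congr rfl fun i hi => by rw [hTg i hi]
  rw [hsum]
  refine (Finset.sum_le_sum fun x _ => hfib x).trans (le_of_eq ?_)
  rw [Finset.sum_add_distrib, ← Finset.mul_sum, ← Finset.sum_mul]
  congr 2
  have := Finset.card_eq_sum_card_fiberwise (f := key) (s := P) (t := Finset.univ) (by simp)
  rw [this]; push_cast; rfl

end Product

/-- Switching on three bits one after the other, as a sum of three discrete derivatives. -/
lemma sum_discreteDeriv_eq_sub {X : Type*} [DecidableEq X] (f : (X → Bool) → ℝ) {u v d : X}
    (huv : u ≠ v) (hud : u ≠ d) (hvd : v ≠ d) (ω : X → Bool) :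
    discreteDeriv f u (Function.update (Function.update ω v false) d false) +
        discreteDeriv f d (Function.update (Function.update ω v false) u true) +
        discreteDeriv f v (Function.update (Function.update ω d true) u true) =
      f (Function.update (Function.update (Function.update ω d true) u true) v true) -
        f (Function.update (Function.update (Function.update ω v false) d false) u false) := by
  unfold discreteDeriv
  rw [Function.update_comm hud true false (Function.update ω v false),
    Function.update_comm hud true true (Function.update ω v false),
    Function.update_comm huv true false (Function.update ω d true),
    Function.update_comm hvd false true ω]
  ring

section Hypergraph

variable {X ι : Type*}

/-- `M` is a matching of the hypergraph with edges `supp e`, `e ∈ E`, and it only uses elements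
selected by `ω`. -/
def IsMatchingIn (E : Finset ι) (supp : ι → Finset X) (ω : X → Bool) (M : Finset ι) : Prop :=
  M ⊆ E ∧ (∀ e ∈ M, ∀ f ∈ M, e ≠ f → Disjoint (supp e) (supp f)) ∧
    ∀ e ∈ M, ∀ x ∈ supp e, ω x = true

open Classical in
/-- The matching number of the hypergraph with edges `supp e`, `e ∈ E`, restricted to `ω`. -/
noncomputable def matchingNumber (E : Finset ι) (supp : ι → Finset X) (ω : X → Bool) : ℕ :=
  {M ∈ E.powerset | IsMatchingIn E supp ω M}.sup Finset.card

variable {E : Finset ι} {supp : ι → Finset X}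

lemma IsMatchingIn.card_le {ω : X → Bool} {M : Finset ι} (hM : IsMatchingIn E supp ω M) :
    M.card ≤ matchingNumber E supp ω := by
  classical
  exact Finset.le_sup (f := Finset.card)
    (Finset.mem_filter.2 ⟨Finset.mem_powerset.2 hM.1, hM⟩)

lemma exists_card_eq_matchingNumber (E : Finset ι) (supp : ι → Finset X) (ω : X → Bool) :
    ∃ M, IsMatchingIn E supp ω M ∧ M.card = matchingNumber E supp ω := by
  classical
  obtain ⟨M, hM, h⟩ := Finset.exists_mem_eq_sup {M ∈ E.powerset | IsMatchingIn E supp ω M}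
    ⟨∅, Finset.mem_filter.2 ⟨Finset.empty_mem_powerset E, by simp [IsMatchingIn]⟩⟩ Finset.card
  exact ⟨M, (Finset.mem_filter.1 hM).2, h.symm⟩

lemma matchingNumber_mono {ω ω' : X → Bool} (h : ∀ x, ω x = true → ω' x = true) :
    matchingNumber E supp ω ≤ matchingNumber E supp ω' := by
  obtain ⟨M, hM, hc⟩ := exists_card_eq_matchingNumber E supp ω
  rw [← hc]
  exact IsMatchingIn.card_le ⟨hM.1, hM.2.1, fun e he x hx => h x (hM.2.2 e he x hx)⟩

lemma matchingNumber_update_le [DecidableEq X] (ω : X → Bool) (x : X) :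
    matchingNumber E supp (Function.update ω x true) ≤
      matchingNumber E supp (Function.update ω x false) + 1 := by
  classical
  obtain ⟨M, hM, hc⟩ := exists_card_eq_matchingNumber E supp (Function.update ω x true)
  rw [← hc]
  have havoid : ∀ e ∈ M, x ∉ supp e → ∀ y ∈ supp e, Function.update ω x false y = true := by
    intro e he hx y hy
    have hne : y ≠ x := fun h => hx (h ▸ hy)
    simpa [Function.update_of_ne hne] using hM.2.2 e he y hy
  by_cases h : ∃ e ∈ M, x ∈ supp e
  · obtain ⟨e, he, hx⟩ := h
    have : IsMatchingIn E supp (Function.update ω x false) (M.erase e) := by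
      refine ⟨(Finset.erase_subset _ _).trans hM.1, fun f hf g hg => hM.2.1 f
        (Finset.mem_of_mem_erase hf) g (Finset.mem_of_mem_erase hg), fun f hf => ?_⟩
      refine havoid f (Finset.mem_of_mem_erase hf) fun hxf => ?_
      exact Finset.disjoint_left.1 (hM.2.1 e he f (Finset.mem_of_mem_erase hf)
        (Finset.ne_of_mem_erase hf).symm) hx hxf
    have := this.card_le
    rw [Finset.card_erase_of_mem he] at this
    omega
  · push Not at h
    have : IsMatchingIn E supp (Function.update ω x false) M :=
      ⟨hM.1, hM.2.1, fun e he => havoid e he (h e he)⟩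
    have := this.card_le
    omega

lemma matchingNumber_add_one_le {ω ω' : X → Bool} {e : ι} (he : e ∈ E) (hne : (supp e).Nonempty)
    (hω : ∀ x ∈ supp e, ω x = false) (hω' : ∀ x ∈ supp e, ω' x = true)
    (h : ∀ x, ω x = true → ω' x = true) :
    matchingNumber E supp ω + 1 ≤ matchingNumber E supp ω' := by
  classical
  obtain ⟨M, hM, hc⟩ := exists_card_eq_matchingNumber E supp ω
  have hdisj : ∀ f ∈ M, Disjoint (supp e) (supp f) := by
    intro f hf
    refine Finset.disjoint_left.2 fun x hx hxf => ?_
    simpa [hω x hx] using hM.2.2 f hf x hxf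
  have heM : e ∉ M := fun heM => hne.ne_empty (disjoint_self.1 (hdisj e heM))
  have : IsMatchingIn E supp ω' (insert e M) := by
    refine ⟨Finset.insert_subset he hM.1, ?_, ?_⟩
    · intro f hf g hg hfg
      rcases Finset.mem_insert.1 hf with rfl | hf' <;>
        rcases Finset.mem_insert.1 hg with rfl | hg'
      · exact absurd rfl hfg
      · exact hdisj g hg'
      · exact (hdisj f hf').symm
      · exact hM.2.1 f hf' g hg' hfg
    · intro f hf x hx
      rcases Finset.mem_insert.1 hf with rfl | hf
      · exact hω' x hx
      · exact h x (hM.2.2 f hf x hx)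
  have := this.card_le
  rwa [Finset.card_insert_of_notMem heM, hc] at this

end Hypergraph

/-- An approximate fractional vertex cover `(y, z)` of the hypergraph of coloured edges of a graph
of minimum degree at least `n / 2` has total weight nearly `n / 2`. -/
lemma le_sum_of_approx_cover {W D : Type*} [Fintype W] [Fintype D] [DecidableEq W]
    {G : SimpleGraph W} [DecidableRel G.Adj] {c : Sym2 W → D} (hc : ProperColoring G c)
    {y : W → ℝ} {z : D → ℝ} {r : W → W → ℝ} {n κ : ℝ} (hn : n = Fintype.card W) (hn0 : 0 < n)
    (hκ : 0 < κ) (hκ1 : κ < 1) (hdeg : ∀ v, n / 2 ≤ G.degree v)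
    (hy0 : ∀ v, 0 ≤ y v) (hy1 : ∀ v, y v ≤ 1) (hz0 : ∀ d, 0 ≤ z d)
    (hcover : ∀ v u, G.Adj v u → 1 ≤ y v + y u + z (c s(v, u)) + r v u)
    (hr : ∀ B : Finset W, ∑ v ∈ B, ∑ u ∈ G.neighborFinset v, r v u ≤ κ ^ 2 * n ^ 2) :
    (1 - 4 * κ) * (n / 2) ≤ ∑ v, y v + ∑ d, z d := by
  classical
  set B : Finset W := {v | κ * n < ∑ u ∈ G.neighborFinset v, r v u} with hB
  have hBcard : (B.card : ℝ) ≤ κ * n := by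
    have h1 : B.card • (κ * n) ≤ ∑ v ∈ B, ∑ u ∈ G.neighborFinset v, r v u :=
      Finset.card_nsmul_le_sum _ _ _ fun v hv => (Finset.mem_filter.1 hv).2.le
    have h2 := h1.trans (hr B)
    rw [nsmul_eq_mul] at h2
    have : 0 < κ * n := by positivity
    nlinarith
  have hcompl : ((Bᶜ).card : ℝ) = n - B.card := by
    rw [Finset.card_compl, Nat.cast_sub (Finset.card_le_univ B), hn]
  have hne : (Bᶜ).Nonempty := by
    rw [← Finset.card_pos]
    have : (0 : ℝ) < (Bᶜ).card := by rw [hcompl]; nlinarith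
    exact_mod_cast this
  obtain ⟨v, hv, hmin⟩ := Finset.exists_min_image Bᶜ y hne
  have hrv : ∑ u ∈ G.neighborFinset v, r v u ≤ κ * n := by
    have : v ∉ B := Finset.mem_compl.1 hv
    simpa [hB] using this
  have hz : 0 ≤ ∑ d, z d := Finset.sum_nonneg fun d _ => hz0 d
  have hyv0 := hy0 v
  have hyv1 := hy1 v
  by_cases hhalf : y v ≤ 1 / 2
  · have hd := hdeg v
    have hcov : (G.degree v : ℝ) * (1 - y v) - κ * n ≤
        ∑ u ∈ G.neighborFinset v, y u + ∑ u ∈ G.neighborFinset v, z (c s(v, u)) := by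
      have h1 : (G.neighborFinset v).card • (1 - y v) ≤
          ∑ u ∈ G.neighborFinset v, (y u + z (c s(v, u)) + r v u) :=
        Finset.card_nsmul_le_sum _ _ _ fun u hu => by
          have := hcover v u (by simpa using hu)
          linarith
      rw [nsmul_eq_mul, G.card_neighborFinset_eq_degree, Finset.sum_add_distrib,
        Finset.sum_add_distrib] at h1
      linarith
    have hcol : ∑ u ∈ G.neighborFinset v, z (c s(v, u)) ≤ ∑ d, z d := by
      rw [← Finset.sum_image (s := G.neighborFinset v) (g := fun u => c s(v, u)) (f := z)]
      · exact Finset.sum_le_sum_of_subset_of_nonneg (Finset.subset_univ _) fun d _ _ => hz0 d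
      · intro u hu u' hu' h
        by_contra hne
        exact hc v u u' (by simpa using hu) (by simpa using hu') hne h
    have hrest : (n - G.degree v - κ * n) * y v ≤ ∑ u ∈ (G.neighborFinset v)ᶜ, y u := by
      have h1 : ((G.neighborFinset v)ᶜ \ B).card • y v ≤ ∑ u ∈ (G.neighborFinset v)ᶜ \ B, y u :=
        Finset.card_nsmul_le_sum _ _ _ fun u hu =>
          hmin u (Finset.mem_compl.2 (Finset.mem_sdiff.1 hu).2)
      have h2 : ∑ u ∈ (G.neighborFinset v)ᶜ \ B, y u ≤ ∑ u ∈ (G.neighborFinset v)ᶜ, y u :=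
        Finset.sum_le_sum_of_subset_of_nonneg Finset.sdiff_subset fun u _ _ => hy0 u
      have h3 : n - G.degree v - κ * n ≤ ((G.neighborFinset v)ᶜ \ B).card := by
        have h4 := Finset.le_card_sdiff B (G.neighborFinset v)ᶜ
        have h5 : (((G.neighborFinset v)ᶜ).card : ℝ) = n - G.degree v := by
          rw [Finset.card_compl, Nat.cast_sub (Finset.card_le_univ _), hn,
            G.card_neighborFinset_eq_degree]
        have h6 : (((G.neighborFinset v)ᶜ).card : ℝ) ≤ ((G.neighborFinset v)ᶜ \ B).card + B.card := by
          exact_mod_cast (by omega)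
        linarith
      rw [nsmul_eq_mul] at h1
      nlinarith
    have hsplit := Finset.sum_add_sum_compl (G.neighborFinset v) y
    nlinarith [mul_nonneg (sub_nonneg.2 hd) (sub_nonneg.2 hhalf), mul_pos hκ hn0]
  · have h1 : (Bᶜ).card • (1 / 2 : ℝ) ≤ ∑ u ∈ Bᶜ, y u :=
      Finset.card_nsmul_le_sum _ _ _ fun u hu => (lt_of_not_ge hhalf).le.trans (hmin u hu)
    have h2 : ∑ u ∈ Bᶜ, y u ≤ ∑ u, y u :=
      Finset.sum_le_sum_of_subset_of_nonneg (Finset.subset_univ _) fun u _ _ => hy0 u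
    rw [nsmul_eq_mul, hcompl] at h1
    nlinarith [mul_pos hκ hn0]

/-- The vertices and the colour of an edge. -/
def edgeSupport {W D : Type*} [DecidableEq W] [DecidableEq D] (c : Sym2 W → D) (e : Sym2 W) :
    Finset (W ⊕ D) :=
  e.toFinset.disjSum {c e}

lemma exists_rainbow_matching {W D : Type*} [Fintype W] [Fintype D] [DecidableEq W] [DecidableEq D]
    {G : SimpleGraph W} [DecidableRel G.Adj] {c : Sym2 W → D} (hc : ProperColoring G c)
    {n ε : ℝ} (hn : n = Fintype.card W) (hε : 0 < ε) (hε1 : ε < 1)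
    (hlarge : 9 / ((ε / 4) ^ 2 * (ε / 16) ^ 4) ≤ n) (hdeg : ∀ v, n / 2 ≤ G.degree v) :
    ∃ k : ℕ, (1 - ε) * n / 2 ≤ k ∧ HasRainbowMatching G c k := by
  classical
  set δ := ε / 4 with hδ
  set κ := ε / 16 with hκ
  have hδ0 : 0 < δ := by positivity
  have hκ0 : 0 < κ := by positivity
  have hn0 : 0 < n := lt_of_lt_of_le (by positivity) hlarge
  set E := G.edgeFinset
  set supp := edgeSupport c with hsupp
  set f : (W ⊕ D → Bool) → ℝ := fun ω => matchingNumber E supp ω with hf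
  obtain ⟨M, hM, hMc⟩ := exists_card_eq_matchingNumber E supp fun _ => true
  refine ⟨M.card, ?_, M, rfl, fun e he => by simpa [E] using hM.1 he, ?_, ?_⟩
  rotate_left
  · intro e he e' he' hne x hx hx'
    exact Finset.disjoint_left.1 (hM.2.1 e he e' he' hne)
      (show Sum.inl x ∈ supp e by simp [hsupp, edgeSupport, hx]) (by simp [hsupp, edgeSupport, hx'])
  · intro e he e' he' hne hcc
    exact Finset.disjoint_left.1 (hM.2.1 e he e' he' hne)
      (show Sum.inr (c e) ∈ supp e by simp [hsupp, edgeSupport, hcc]) (by simp [hsupp, edgeSupport, hcc])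
  by_contra! hlt
  have hf0 : ∀ ω, 0 ≤ f ω := fun ω => Nat.cast_nonneg _
  have hfM : ∀ ω, f ω ≤ M.card := fun ω => by
    rw [hMc]; exact Nat.cast_le.2 (matchingNumber_mono fun _ _ => rfl)
  have hD0 : ∀ x ω, 0 ≤ discreteDeriv f x ω := fun x ω => by
    refine sub_nonneg.2 (Nat.cast_le.2 (matchingNumber_mono fun y => ?_))
    by_cases h : y = x
    · subst h; simp
    · simp [Function.update_of_ne h]
  have hD1 : ∀ x ω, discreteDeriv f x ω ≤ 1 := fun x ω => by
    have : f (Function.update ω x true) ≤ f (Function.update ω x false) + 1 := by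
      simp only [hf]
      exact_mod_cast matchingNumber_update_le (E := E) (supp := supp) ω x
    unfold discreteDeriv
    linarith
  obtain ⟨p, hp, hslope⟩ := exists_hasDerivAt_eq_slope (fun q => expect q f)
    (fun q => ∑ x, expect q (discreteDeriv f x)) (a := δ) (b := 1 - δ) (by linarith)
    (fun q _ => (hasDerivAt_expect f q).continuousAt.continuousWithinAt)
    (fun q _ => hasDerivAt_expect f q)
  have hp0 : 0 < p := hδ0.trans hp.1
  have hp1 : p < 1 := by linarith [hp.2]
  have htotal : ∑ x, expect p (discreteDeriv f x) ≤ (1 - ε / 2) * (n / 2) := by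
    have hb : expect (1 - δ) f ≤ M.card := by
      refine (expect_mono (by linarith) (by linarith) hfM).trans ?_
      rw [expect_const]
    have ha : 0 ≤ expect δ f := by
      refine le_trans ?_ (expect_mono hδ0 (by linarith) hf0)
      rw [expect_const]
    rw [hslope, div_le_iff₀ (by linarith)]
    nlinarith [mul_pos hε hn0, mul_pos hε (mul_pos hε hn0)]
  set y : W → ℝ := fun v => expect p (discreteDeriv f (Sum.inl v)) with hy
  set z : D → ℝ := fun d => expect p (discreteDeriv f (Sum.inr d)) with hz
  have hyz : ∑ x, expect p (discreteDeriv f x) = ∑ v, y v + ∑ d, z d := Fintype.sum_sum_type _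
  have hE0 : ∀ x, 0 ≤ expect p (discreteDeriv f x) := fun x => by
    refine le_trans ?_ (expect_mono hp0 hp1 (hD0 x))
    rw [expect_const]
  have hE1 : ∀ x, expect p (discreteDeriv f x) ≤ 1 := fun x => by
    refine (expect_mono hp0 hp1 (hD1 x)).trans ?_
    rw [expect_const]
  set r₁ : W × W → ℝ := fun i => expect p (fun ω => discreteDeriv f (Sum.inl i.2)
    (Function.update (Function.update ω (Sum.inl i.1) false) (Sum.inr (c s(i.1, i.2))) false)) -
    expect p (discreteDeriv f (Sum.inl i.2)) with hr₁
  set r₂ : W × W → ℝ := fun i => expect p (fun ω => discreteDeriv f (Sum.inr (c s(i.1, i.2)))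
    (Function.update (Function.update ω (Sum.inl i.1) false) (Sum.inl i.2) true)) -
    expect p (discreteDeriv f (Sum.inr (c s(i.1, i.2)))) with hr₂
  set r₃ : W × W → ℝ := fun i => expect p (fun ω => discreteDeriv f (Sum.inl i.1)
    (Function.update (Function.update ω (Sum.inr (c s(i.1, i.2))) true) (Sum.inl i.2) true)) -
    expect p (discreteDeriv f (Sum.inl i.1)) with hr₃
  have hcover : ∀ v u, G.Adj v u →
      1 ≤ y v + y u + z (c s(v, u)) + (r₁ (v, u) + r₂ (v, u) + r₃ (v, u)) := by
    intro v u huv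
    have hne : (Sum.inl v : W ⊕ D) ≠ Sum.inl u := fun h => huv.ne (Sum.inl_injective h)
    have hnev : (Sum.inl v : W ⊕ D) ≠ Sum.inr (c s(v, u)) := by simp
    have hneu : (Sum.inl u : W ⊕ D) ≠ Sum.inr (c s(v, u)) := by simp
    have hpt : ∀ ω : W ⊕ D → Bool, 1 ≤
        discreteDeriv f (Sum.inl u) (Function.update (Function.update ω (Sum.inl v) false)
          (Sum.inr (c s(v, u))) false) +
        discreteDeriv f (Sum.inr (c s(v, u))) (Function.update (Function.update ω (Sum.inl v) false)
          (Sum.inl u) true) +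
        discreteDeriv f (Sum.inl v) (Function.update (Function.update ω
          (Sum.inr (c s(v, u))) true) (Sum.inl u) true) := by
      intro ω
      rw [sum_discreteDeriv_eq_sub f hne.symm hneu hnev]
      have hmem : ∀ x ∈ supp s(v, u),
          x = Sum.inl v ∨ x = Sum.inl u ∨ x = Sum.inr (c s(v, u)) := by
        rintro (x | d) hx
        · simpa [hsupp, edgeSupport] using hx
        · simpa [hsupp, edgeSupport] using hx
      have hstep := matchingNumber_add_one_le (E := E) (supp := supp) (e := s(v, u))
        (ω := Function.update (Function.update (Function.update ω (Sum.inl v) false)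
          (Sum.inr (c s(v, u))) false) (Sum.inl u) false)
        (ω' := Function.update (Function.update (Function.update ω (Sum.inr (c s(v, u))) true)
          (Sum.inl u) true) (Sum.inl v) true)
        (by simpa [E] using huv) ⟨Sum.inl v, by simp [hsupp, edgeSupport]⟩
        (fun x hx => by rcases hmem x hx with rfl | rfl | rfl <;> simp [Function.update_apply])
        (fun x hx => by rcases hmem x hx with rfl | rfl | rfl <;> simp [Function.update_apply])
        (fun x => by simp only [Function.update_apply]; grind)
      have hstep' : ((_ + 1 : ℕ) : ℝ) ≤ _ := Nat.cast_le.2 hstep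
      rw [Nat.cast_add, Nat.cast_one] at hstep'
      simp only [hf]
      linarith
    have h1 := expect_mono hp0 hp1 hpt
    rw [expect_const, expect_add, expect_add] at h1
    simp only [hy, hz, hr₁, hr₂, hr₃]
    linarith
  have herr : ∀ B : Finset W, ∑ v ∈ B, ∑ u ∈ G.neighborFinset v,
      (r₁ (v, u) + r₂ (v, u) + r₃ (v, u)) ≤ κ ^ 2 * n ^ 2 := by
    intro B
    set P : Finset (W × W) := {i ∈ B ×ˢ Finset.univ | G.Adj i.1 i.2} with hP
    have hPadj : ∀ i ∈ P, G.Adj i.1 i.2 := fun i hi => (Finset.mem_filter.1 hi).2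
    have hPcard : (P.card : ℝ) ≤ n ^ 2 := by
      have : P.card ≤ Fintype.card W * Fintype.card W := by
        rw [← Fintype.card_prod]; exact Finset.card_le_univ P
      rw [hn, sq]; exact_mod_cast this
    have hsum : ∑ v ∈ B, ∑ u ∈ G.neighborFinset v, (r₁ (v, u) + r₂ (v, u) + r₃ (v, u)) =
        ∑ i ∈ P, r₁ i + ∑ i ∈ P, r₂ i + ∑ i ∈ P, r₃ i := by
      rw [← Finset.sum_add_distrib, ← Finset.sum_add_distrib, hP, Finset.sum_filter,
        Finset.sum_product]
      refine Finset.sum_congr rfl fun v _ => ?_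
      rw [← Finset.sum_filter]
      refine Finset.sum_congr ?_ fun _ _ => rfl
      ext u; simp
    set θ := κ ^ 2 * n / 3 with hθ
    have hθ0 : 0 < θ := by positivity
    have hdart : ∀ v u u', G.Adj v u → G.Adj v u' → c s(v, u) = c s(v, u') → u = u' :=
      fun v u u' h h' hcc => by_contra fun hne => hc v u u' h h' hne hcc
    have b₁ := sum_expect_update_sub_le hδ0 hp.1.le hp.2.le P (fun i => (Sum.inl i.2 : W ⊕ D))
      (fun i => Sum.inr (c s(i.1, i.2))) (fun i => Sum.inl i.1) false false (discreteDeriv f) hθ0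
      (by simp) (by
        rintro ⟨v, u⟩ hi ⟨v', u'⟩ hj hne hk
        obtain rfl : u = u' := by simpa using hk
        have hv : v ≠ v' := fun h => hne (by rw [h])
        refine Or.inl ⟨fun h => hv (hdart u v v' (hPadj _ hi).symm (hPadj _ hj).symm ?_), by simp,
          by simp, by simpa using hv⟩
        simpa [Sym2.eq_swap] using h) hD0 hD1
    have b₂ := sum_expect_update_sub_le hδ0 hp.1.le hp.2.le P
      (fun i => (Sum.inr (c s(i.1, i.2)) : W ⊕ D))
      (fun i => Sum.inl i.2) (fun i => Sum.inl i.1) true false (discreteDeriv f) hθ0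
      (fun i hi => by simpa using (hPadj i hi).ne') (by
        rintro ⟨v, u⟩ hi ⟨v', u'⟩ hj hne hk
        have hcc : c s(v, u) = c s(v', u') := by simpa using hk
        have huv := hPadj _ hi
        have huv' := hPadj _ hj
        dsimp only at huv huv' ⊢
        by_cases huv'' : u = v'
        · exact Or.inr ⟨by simp, by rw [huv'']⟩
        refine Or.inl ⟨?_, by simpa using huv'', ?_, ?_⟩
        · intro h
          obtain rfl : u = u' := by simpa using h
          refine hne ?_
          rw [hdart u v v' huv.symm huv'.symm (by rwa [Sym2.eq_swap, Sym2.eq_swap (a := u)])]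
        · intro h
          obtain rfl : v = u' := by simpa using h
          exact huv'' (hdart v u v' huv huv'.symm (by rwa [Sym2.eq_swap (a := v) (b := v')]))
        · intro h
          obtain rfl : v = v' := by simpa using h
          exact hne (by rw [hdart v u u' huv huv' hcc])) hD0 hD1
    have b₃ := sum_expect_update_sub_le hδ0 hp.1.le hp.2.le P (fun i => (Sum.inl i.1 : W ⊕ D))
      (fun i => Sum.inl i.2) (fun i => Sum.inr (c s(i.1, i.2))) true true (discreteDeriv f) hθ0
      (by simp) (by
        rintro ⟨v, u⟩ hi ⟨v', u'⟩ hj hne hk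
        obtain rfl : v = v' := by simpa using hk
        have hu : u ≠ u' := fun h => hne (by rw [h])
        refine Or.inl ⟨by simpa using hu, by simp, by simp,
          fun h => hu (hdart v u u' (hPadj _ hi) (hPadj _ hj) (by simpa using h))⟩) hD0 hD1
    have hmain : θ / 2 * ∑ x, expect p (discreteDeriv f x) ≤ κ ^ 2 * n ^ 2 / 6 := by
      have : ∑ x, expect p (discreteDeriv f x) ≤ n := htotal.trans (by nlinarith)
      have := mul_le_mul_of_nonneg_left this (by positivity : 0 ≤ θ / 2)
      rw [hθ] at this ⊢
      linarith
    have hsmall : P.card * (1 / δ ^ 2 / (2 * θ)) ≤ κ ^ 2 * n ^ 2 / 6 := by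
      refine (mul_le_mul_of_nonneg_right hPcard (by positivity)).trans ?_
      rw [div_le_iff₀ (by positivity)] at hlarge
      rw [hθ, div_div, mul_one_div, div_le_iff₀ (by positivity)]
      have : 0 ≤ n ^ 2 * (n * (δ ^ 2 * κ ^ 4) - 9) :=
        mul_nonneg (by positivity) (by linarith)
      nlinarith
    rw [hsum]
    linarith
  have := le_sum_of_approx_cover hc hn hn0 hκ0 (by linarith) hdeg (fun v => hE0 _)
    (fun v => hE1 _) (fun d => hE0 _) hcover herr
  rw [← hyz] at this
  nlinarith [mul_pos hε hn0]

theorem rainbow_matching_of_min_degree (ε : ℝ) (hε : 0 < ε) :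
    ∃ n₀ : ℕ, ∀ n : ℕ, n₀ ≤ n →
      ∀ (W : Type) [Fintype W], ∀ (D : Type) (G : SimpleGraph W) (c : Sym2 W → D),
        Fintype.card W = n → ProperColoring G c →
        (∀ v : W, (n : ℝ) / 2 ≤ ((G.neighborSet v).ncard : ℝ)) →
        ∃ k : ℕ, (1 - ε) * (n : ℝ) / 2 ≤ (k : ℝ) ∧ HasRainbowMatching G c k := by
  classical
  obtain ⟨n₀, hn₀⟩ := exists_nat_ge (9 / ((ε / 4) ^ 2 * (ε / 16) ^ 4))
  refine ⟨n₀, fun n hn W _ D G c hcard hc hdeg => ?_⟩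
  rcases le_or_gt 1 ε with h1 | h1
  · refine ⟨0, ?_, ∅, by simp⟩
    have : (0 : ℝ) ≤ n := Nat.cast_nonneg n
    push_cast
    nlinarith
  let c' : Sym2 W → Set.range c := Set.rangeFactorization c
  have : Fintype (Set.range c) := Fintype.ofFinite _
  obtain ⟨k, hk, M, hMk, hME, hMd, hMc⟩ := exists_rainbow_matching (G := G) (c := c')
    (n := n) (fun u v w huv huw hne h => hc u v w huv huw hne (congrArg Subtype.val h))
    (by rw [hcard]) hε h1 (hn₀.trans (by exact_mod_cast hn))
    (fun v => by
      have := hdeg v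
      rwa [Set.ncard_eq_toFinset_card', ← SimpleGraph.neighborFinset_def,
        SimpleGraph.card_neighborFinset_eq_degree] at this)
  exact ⟨k, hk, M, hMk, hME, hMd, fun e he e' he' hne h => hMc e he e' he' hne (Subtype.ext h)⟩

end Paper
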